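/- arXiv:1804.02585 — 10 statements merged into one kernel-verified Lean document; each statement's English description precedes it below -/
import Mathlib

section
/- Let U ⊆ ℝ² be open, Ω : U → ℝ continuous, and C₀, C₁, C real constants. Suppose h, h̃ : U → ℝ are twice differentiable and satisfy Δ₀h + 2Ω(−C₀ + C₁·exp h) = 0 and Δ₀h̃ + 2(exp h)·Ω(−C₁ + C·exp h̃) = 0 on U. Then Δ₀(h + h̃) + 2Ω(−C₀ + C·exp(h + h̃)) = 0 on U. (Superposition of a vortex of type (C, C₁) on the rescaled background e^hΩ with a vortex of type (C₁, C₀) produces a vortex of type (C, C₀).) -/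
/-- The flat Laplacian `Δ₀ = ∂²/∂x² + ∂²/∂y²` on `ℝ²`. -/
noncomputable def lap2 (f : ℝ × ℝ → ℝ) (p : ℝ × ℝ) : ℝ :=
  fderiv ℝ (fun q => fderiv ℝ f q (1, 0)) p (1, 0) +
  fderiv ℝ (fun q => fderiv ℝ f q (0, 1)) p (0, 1)

/-- Superposition of a vortex of type `(C, C₁)` on the rescaled background `e^h Ω`
with a vortex of type `(C₁, C₀)` produces a vortex of type `(C, C₀)`. -/
theorem vortex_superposition
    (U : Set (ℝ × ℝ)) (hU : IsOpen U)
    (Ω : ℝ × ℝ → ℝ) (hΩ : ContinuousOn Ω U)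
    (C₀ C₁ C : ℝ)
    (h htil : ℝ × ℝ → ℝ)
    (hh : ContDiffOn ℝ 2 h U) (hhtil : ContDiffOn ℝ 2 htil U)
    (heq1 : ∀ p ∈ U, lap2 h p + 2 * Ω p * (-C₀ + C₁ * Real.exp (h p)) = 0)
    (heq2 : ∀ p ∈ U,
      lap2 htil p + 2 * Real.exp (h p) * Ω p * (-C₁ + C * Real.exp (htil p)) = 0) :
    ∀ p ∈ U,
      lap2 (fun q => h q + htil q) p
        + 2 * Ω p * (-C₀ + C * Real.exp (h p + htil p)) = 0 := by
  intro p hp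
  have key : ∀ v : ℝ × ℝ,
      fderiv ℝ (fun q => fderiv ℝ (fun q => h q + htil q) q v) p v =
      fderiv ℝ (fun q => fderiv ℝ h q v) p v + fderiv ℝ (fun q => fderiv ℝ htil q v) p v := by
    intro v
    have hd : ∀ f : ℝ × ℝ → ℝ, ContDiffOn ℝ 2 f U →
        DifferentiableAt ℝ (fun q => fderiv ℝ f q v) p := by
      intro f hf
      have h1 : ContDiffAt ℝ 1 (fderiv ℝ f) p :=
        (hf.contDiffAt (hU.mem_nhds hp)).fderiv_right (by norm_num)
      exact (h1.differentiableAt (by norm_num)).clm_apply (differentiableAt_const v)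
    have he : (fun q => fderiv ℝ (fun q => h q + htil q) q v) =ᶠ[nhds p]
        (fun q => fderiv ℝ h q v + fderiv ℝ htil q v) := by
      filter_upwards [hU.mem_nhds hp] with q hq
      have a1 := (hh.contDiffAt (hU.mem_nhds hq)).differentiableAt (by norm_num)
      have a2 := (hhtil.contDiffAt (hU.mem_nhds hq)).differentiableAt (by norm_num)
      rw [fderiv_fun_add a1 a2]
      rfl
    rw [he.fderiv_eq, fderiv_fun_add (hd h hh) (hd htil hhtil)]
    rfl
  have e1 := heq1 p hp
  have e2 := heq2 p hp
  have hl : lap2 (fun q => h q + htil q) p = lap2 h p + lap2 htil p := by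
    unfold lap2
    rw [key, key]
    ring
  rw [hl, Real.exp_add]
  linear_combination e1 + e2
end

section
/- Let U ⊆ ℂ be open, C₀, C ∈ ℝ, Ω : U → ℝ continuous, φ : U → ℂ twice continuously differentiable and nowhere vanishing, and a_w : U → ℂ continuously differentiable with a_w̄ := conj(a_w). If on U the vortex equations ∂_w̄φ − i·a_w̄·φ = 0 and (i/2)(∂_w a_w̄ − ∂_w̄ a_w) + (Ω/4)(−C₀ + C·|φ|²) = 0 hold, then h := ln|φ|² satisfies Manton's equation Δ₀h − 2Ω(C₀ − C·exp h) = 0 on U. -/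
/-- `∂_x f` at `z`, identifying `ℂ ≅ ℝ²` via `w = x + iy`. -/
noncomputable def dxC (f : ℂ → ℂ) (z : ℂ) : ℂ := fderiv ℝ f z 1

/-- `∂_y f` at `z`. -/
noncomputable def dyC (f : ℂ → ℂ) (z : ℂ) : ℂ := fderiv ℝ f z Complex.I

/-- The Wirtinger derivative `∂_w = ½(∂_x − i∂_y)`. -/
noncomputable def wd (f : ℂ → ℂ) (z : ℂ) : ℂ := (dxC f z - Complex.I * dyC f z) / 2

/-- The Wirtinger derivative `∂_w̄ = ½(∂_x + i∂_y)`. -/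
noncomputable def wdbar (f : ℂ → ℂ) (z : ℂ) : ℂ := (dxC f z + Complex.I * dyC f z) / 2

/-- The flat Laplacian `Δ₀ = ∂²/∂x² + ∂²/∂y²` for real functions on `ℂ ≅ ℝ²`. -/
noncomputable def lapC (f : ℂ → ℝ) (z : ℂ) : ℝ :=
  fderiv ℝ (fun w => fderiv ℝ f w 1) z 1 +
  fderiv ℝ (fun w => fderiv ℝ f w Complex.I) z Complex.I


theorem aux_P (φ : ℂ → ℂ) (z : ℂ) (hφ : ContDiffAt ℝ 2 φ z) (h0 : φ z ≠ 0) (v : ℂ) :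
    DifferentiableAt ℝ (fun w => fderiv ℝ φ w v / φ w) z ∧
    ∀ u, fderiv ℝ (fun w => fderiv ℝ φ w v / φ w) z u * φ z ^ 2 =
      fderiv ℝ (fderiv ℝ φ) z u v * φ z - fderiv ℝ φ z v * fderiv ℝ φ z u := by
  have hd : DifferentiableAt ℝ φ z := hφ.differentiableAt (by norm_num)
  have hd2 : DifferentiableAt ℝ (fderiv ℝ φ) z :=
    (hφ.fderiv_right (m := 1) (by norm_num)).differentiableAt (by norm_num)
  have hn : DifferentiableAt ℝ (fun w => fderiv ℝ φ w v) z :=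
    hd2.clm_apply (differentiableAt_const v)
  have hP : DifferentiableAt ℝ (fun w => fderiv ℝ φ w v / φ w) z := by
    simp only [div_eq_mul_inv]
    exact hn.mul (hd.inv h0)
  refine ⟨hP, fun u => ?_⟩
  have hev : (fun w => (fderiv ℝ φ w v / φ w) * φ w) =ᶠ[nhds z] fun w => fderiv ℝ φ w v := by
    filter_upwards [hd.continuousAt.eventually_ne h0] with w hw
    exact div_mul_cancel₀ _ hw
  have h1 := hev.fderiv_eq (𝕜 := ℝ)
  rw [fderiv_fun_mul hP hd, fderiv_clm_apply hd2 (differentiableAt_const v)] at h1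
  have h2 := congrArg (fun L : ℂ →L[ℝ] ℂ => L u) h1
  simp at h2
  field_simp at h2
  linear_combination h2

theorem aux_log (φ : ℂ → ℂ) (z : ℂ) (hφ : DifferentiableAt ℝ φ z) (h0 : φ z ≠ 0) (v : ℂ) :
    fderiv ℝ (fun w => Real.log (Complex.normSq (φ w))) z v = 2 * (fderiv ℝ φ z v / φ z).re := by
  have hre := Complex.reCLM.hasFDerivAt.comp z hφ.hasFDerivAt
  have him := Complex.imCLM.hasFDerivAt.comp z hφ.hasFDerivAt
  have hN : Complex.normSq (φ z) ≠ 0 := by simpa using h0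
  have := ((hre.mul hre).add (him.mul him)).log (by simpa [Complex.normSq_apply] using hN)
  have h2 : fderiv ℝ (fun w => Real.log (Complex.normSq (φ w))) z = _ := this.fderiv
  rw [h2]
  simp only [Complex.div_re, Complex.normSq_apply] at *
  simp
  field_simp
  ring

/-- If the vortex equations `∂_w̄φ − i a_w̄ φ = 0` and
`(i/2)(∂_w a_w̄ − ∂_w̄ a_w) + (Ω/4)(−C₀ + C|φ|²) = 0` hold on `U`, then
`h = ln|φ|²` satisfies Manton's equation `Δ₀h − 2Ω(C₀ − C e^h) = 0` on `U`. -/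
theorem manton_equation_from_vortex_equations
    (U : Set ℂ) (hU : IsOpen U)
    (C₀ C : ℝ) (Ω : ℂ → ℝ) (hΩ : ContinuousOn Ω U)
    (φ : ℂ → ℂ) (hφ : ContDiffOn ℝ 2 φ U) (hφ0 : ∀ z ∈ U, φ z ≠ 0)
    (aw : ℂ → ℂ) (haw : ContDiffOn ℝ 1 aw U)
    (hv1 : ∀ z ∈ U, wdbar φ z - Complex.I * (starRingEnd ℂ) (aw z) * φ z = 0)
    (hv2 : ∀ z ∈ U,
      (Complex.I / 2) * (wd (fun w => (starRingEnd ℂ) (aw w)) z - wdbar aw z)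
        + ((Ω z : ℂ) / 4) * (-(C₀ : ℂ) + (C : ℂ) * (Complex.normSq (φ z) : ℂ)) = 0) :
    ∀ z ∈ U,
      lapC (fun w => Real.log (Complex.normSq (φ w))) z
        - 2 * Ω z * (C₀ - C * Real.exp (Real.log (Complex.normSq (φ z)))) = 0 := by
  intro z hz
  have hcd : ∀ w ∈ U, ContDiffAt ℝ 2 φ w := fun w hw => hφ.contDiffAt (hU.mem_nhds hw)
  have hnz := hU.mem_nhds hz
  have hda : DifferentiableAt ℝ aw z :=
    (haw.contDiffAt hnz).differentiableAt (by norm_num)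
  have h0 := hφ0 z hz
  obtain ⟨hP, hP'⟩ := aux_P φ z (hcd z hz) h0 1
  obtain ⟨hQ, hQ'⟩ := aux_P φ z (hcd z hz) h0 Complex.I
  have hlap : ∀ v, fderiv ℝ (fun w => fderiv ℝ
      (fun w => Real.log (Complex.normSq (φ w))) w v) z v =
      2 * (fderiv ℝ (fun w => fderiv ℝ φ w v / φ w) z v).re := by
    intro v
    have hPv := (aux_P φ z (hcd z hz) h0 v).1
    have hev : (fun w => fderiv ℝ (fun w => Real.log (Complex.normSq (φ w))) w v) =ᶠ[nhds z]
        fun w => 2 * Complex.reCLM (fderiv ℝ φ w v / φ w) := by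
      filter_upwards [hnz] with w hw
      exact aux_log φ w ((hcd w hw).differentiableAt (by norm_num)) (hφ0 w hw) v
    rw [hev.fderiv_eq]
    have := (Complex.reCLM.hasFDerivAt.comp z hPv.hasFDerivAt).const_mul 2
    have h3 : fderiv ℝ (fun w => 2 * Complex.reCLM (fderiv ℝ φ w v / φ w)) z = _ := this.fderiv
    rw [h3]
    simp
  have hsymm : fderiv ℝ (fderiv ℝ φ) z 1 Complex.I = fderiv ℝ (fderiv ℝ φ) z Complex.I 1 :=
    ((hcd z hz).isSymmSndFDerivAt (by simp)) 1 Complex.I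
  have hcross : fderiv ℝ (fun w => fderiv ℝ φ w Complex.I / φ w) z 1 =
      fderiv ℝ (fun w => fderiv ℝ φ w 1 / φ w) z Complex.I := by
    apply mul_right_cancel₀ (pow_ne_zero 2 h0)
    rw [hP', hQ', hsymm]
    ring
  have hb : ∀ v, (starRingEnd ℂ) (fderiv ℝ aw z v) = -Complex.I / 2 *
      (fderiv ℝ (fun w => fderiv ℝ φ w 1 / φ w) z v +
        Complex.I * fderiv ℝ (fun w => fderiv ℝ φ w Complex.I / φ w) z v) := by
    intro v
    have hev : (fun w => Complex.conjCLE (aw w)) =ᶠ[nhds z] fun w => -Complex.I / 2 *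
        (fderiv ℝ φ w 1 / φ w + Complex.I * (fderiv ℝ φ w Complex.I / φ w)) := by
      filter_upwards [hnz] with w hw
      have h1 := hv1 w hw
      have hw0 := hφ0 w hw
      simp only [wdbar, dxC, dyC] at h1
      simp only [Complex.conjCLE_apply]
      field_simp
      linear_combination (2 * Complex.I) * h1 + (2 * φ w * (starRingEnd ℂ) (aw w)) * Complex.I_sq
    have h1 := hev.fderiv_eq (𝕜 := ℝ)
    have h2 := Complex.conjCLE.toContinuousLinearMap.hasFDerivAt.comp z hda.hasFDerivAt
    have h3 : fderiv ℝ (fun w => Complex.conjCLE (aw w)) z = _ := h2.fderiv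
    have h4 : fderiv ℝ (fun w => -Complex.I / 2 *
        (fderiv ℝ φ w 1 / φ w + Complex.I * (fderiv ℝ φ w Complex.I / φ w))) z = _ :=
      ((hP.hasFDerivAt.add (hQ.hasFDerivAt.const_mul Complex.I)).const_mul (-Complex.I / 2)).fderiv
    rw [h3, h4] at h1
    have h5 := congrArg (fun L : ℂ →L[ℝ] ℂ => L v) h1
    simpa [mul_add] using h5
  have hc : ∀ v, fderiv ℝ (fun w => (starRingEnd ℂ) (aw w)) z v =
      (starRingEnd ℂ) (fderiv ℝ aw z v) := by
    intro v
    have h2 := Complex.conjCLE.toContinuousLinearMap.hasFDerivAt.comp z hda.hasFDerivAt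
    have h3 : fderiv ℝ (fun w => (starRingEnd ℂ) (aw w)) z = _ := h2.fderiv
    rw [h3]
    simp
  have hv := hv2 z hz
  have hb1 := hb 1
  have hbI := hb Complex.I
  simp only [wd, wdbar, dxC, dyC, hc] at hv
  rw [Real.exp_log (Complex.normSq_pos.mpr h0)]
  simp only [lapC, hlap]
  rw [hcross] at hb1
  have e1 := congrArg Complex.re hb1
  have e2 := congrArg Complex.im hb1
  have e3 := congrArg Complex.re hbI
  have e4 := congrArg Complex.im hbI
  have e5 := congrArg Complex.re hv
  simp at e1 e2 e3 e4 e5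
  linarith
end

section
/- Let α, γ ∈ ℝ and let I ⊆ ℝ be an interval with 0 ∉ I. Suppose y : I → ℝ is twice differentiable, nowhere vanishing, and solves the Painlevé III equation with parameters (α, 0, γ, 0): y'' = (y')²/y − y'/x + α·y²/x + γ·y³. Then the function x ↦ x²·(y'/y)² + 2x·(y'/y) − 2α·x·y − γ·x²·y² is constant on I, i.e. it is a first integral of PIII(α, 0, γ, 0). -/
/-- A first integral of Painlevé III with parameters `(α, 0, γ, 0)`:
along every nowhere-vanishing solution `y` of
`y'' = (y')²/y − y'/x + α y²/x + γ y³` on an interval avoiding `0`,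
the quantity `x²(y'/y)² + 2x(y'/y) − 2αxy − γx²y²` is constant. -/
theorem PIII_first_integral
    (α γ : ℝ) (I : Set ℝ) (hI : I.OrdConnected) (h0 : (0 : ℝ) ∉ I)
    (y : ℝ → ℝ)
    (hy1 : ∀ x ∈ I, DifferentiableAt ℝ y x)
    (hy2 : ∀ x ∈ I, DifferentiableAt ℝ (deriv y) x)
    (hynz : ∀ x ∈ I, y x ≠ 0)
    (hode : ∀ x ∈ I,
      deriv (deriv y) x =
        (deriv y x) ^ 2 / y x - deriv y x / x + α * (y x) ^ 2 / x + γ * (y x) ^ 3) :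
    ∀ x ∈ I, ∀ x' ∈ I,
      x ^ 2 * (deriv y x / y x) ^ 2 + 2 * x * (deriv y x / y x)
          - 2 * α * x * y x - γ * x ^ 2 * (y x) ^ 2
        = x' ^ 2 * (deriv y x' / y x') ^ 2 + 2 * x' * (deriv y x' / y x')
          - 2 * α * x' * y x' - γ * x' ^ 2 * (y x') ^ 2 := by
  intro a ha b hb
  have key : ∀ x ∈ I, HasDerivWithinAt (fun x : ℝ =>
      x ^ 2 * (deriv y x / y x) ^ 2 + 2 * x * (deriv y x / y x)
          - 2 * α * x * y x - γ * x ^ 2 * (y x) ^ 2) 0 I x := by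
    intro x hx
    have hx0 : x ≠ 0 := fun h => h0 (h ▸ hx)
    have hy0 := hynz x hx
    have d1 := (hy1 x hx).hasDerivAt
    have d2 := (hy2 x hx).hasDerivAt
    have dq := d2.div d1 hy0
    have di := hasDerivAt_id' x
    have h := (((di.pow 2).mul (dq.pow 2)).add ((di.const_mul 2).mul dq)).sub
      ((di.const_mul (2 * α)).mul d1) |>.sub (((di.pow 2).const_mul γ).mul (d1.pow 2))
    refine (h.congr_deriv ?_).hasDerivWithinAt
    simp only [Pi.div_apply, Pi.pow_apply, Nat.cast_ofNat, Nat.add_one_sub_one, pow_one, mul_one,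
      show 2 - 1 = 1 from rfl]
    rw [hode x hx]
    field_simp
    ring
  have h := hI.convex.norm_image_sub_le_of_norm_hasDerivWithin_le (C := 0) key
    (fun x _ => by simp) hb ha
  rw [zero_mul, norm_le_zero_iff, sub_eq_zero] at h
  exact h
end

section
/- Let α, β ∈ ℝ and let I ⊆ ℝ be an interval with 0 ∉ I. Suppose y : I → ℝ is twice differentiable with y(x) ≠ 0 and y(x) ≠ 1 for all x ∈ I, and solves the Painlevé V equation with parameters (α, β, 0, 0): y'' = (1/(2y) + 1/(y−1))·(y')² − y'/x + ((y−1)²/x²)·(α·y + β/y). Then the function x ↦ (1/y)·(x·y'/(y−1))² + 2β/y − 2α·y is constant on I, i.e. it is a first integral of PV(α, β, 0, 0). -/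
/-- A first integral of Painlevé V with parameters `(α, β, 0, 0)`:
along every solution `y` (omitting the values `0` and `1`) of
`y'' = (1/(2y) + 1/(y−1))(y')² − y'/x + ((y−1)²/x²)(αy + β/y)` on an interval
avoiding `0`, the quantity `(1/y)(xy'/(y−1))² + 2β/y − 2αy` is constant. -/
theorem PV_first_integral
    (α β : ℝ) (I : Set ℝ) (hI : I.OrdConnected) (h0 : (0 : ℝ) ∉ I)
    (y : ℝ → ℝ)
    (hy1 : ∀ x ∈ I, DifferentiableAt ℝ y x)
    (hy2 : ∀ x ∈ I, DifferentiableAt ℝ (deriv y) x)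
    (hy0 : ∀ x ∈ I, y x ≠ 0) (hy1' : ∀ x ∈ I, y x ≠ 1)
    (hode : ∀ x ∈ I,
      deriv (deriv y) x =
        (1 / (2 * y x) + 1 / (y x - 1)) * (deriv y x) ^ 2 - deriv y x / x
          + ((y x - 1) ^ 2 / x ^ 2) * (α * y x + β / y x)) :
    ∀ x ∈ I, ∀ x' ∈ I,
      (1 / y x) * (x * deriv y x / (y x - 1)) ^ 2 + 2 * β / y x - 2 * α * y x
        = (1 / y x') * (x' * deriv y x' / (y x' - 1)) ^ 2 + 2 * β / y x'
          - 2 * α * y x' := by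
  have key : ∀ x ∈ I, HasDerivWithinAt
      (fun x => (1 / y x) * (x * deriv y x / (y x - 1)) ^ 2 + 2 * β / y x - 2 * α * y x) 0 I x := by
    intro x hx
    have hx0 : x ≠ 0 := fun h => h0 (h ▸ hx)
    have hy := hy0 x hx
    have hz : y x - 1 ≠ 0 := sub_ne_zero.mpr (hy1' x hx)
    have d1 := (hy1 x hx).hasDerivAt
    have d2 := (hy2 x hx).hasDerivAt
    have ho := hode x hx
    have D := ((((hasDerivAt_const x (1 : ℝ)).fun_div d1 hy).fun_mul
      ((((hasDerivAt_id' x).fun_mul d2).fun_div (d1.sub_const 1) hz).fun_pow 2)).fun_add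
      ((hasDerivAt_const x (2 * β)).fun_div d1 hy)).fun_sub (d1.const_mul (2 * α))
    refine (D.congr_deriv ?_).hasDerivWithinAt
    rw [ho]
    generalize deriv y x = p
    generalize y x = q at hy hz
    obtain ⟨r, rfl⟩ : ∃ r, q = r + 1 := ⟨q - 1, by ring⟩
    simp only [add_sub_cancel_right, Nat.add_one_sub_one, Nat.reduceSub, pow_one, Nat.cast_ofNat] at hz ⊢
    field_simp
    ring
  intro x hx x' hx'
  have := hI.convex.norm_image_sub_le_of_norm_hasDerivWithin_le (C := 0) key
    (fun _ _ => by simp) hx' hx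
  rw [zero_mul, norm_le_zero_iff, sub_eq_zero] at this
  exact this
end

section
/- Let Γ^a_{bc} be a torsion-free affine connection on an open set U ⊆ ℝ² and let ω be a nowhere-vanishing C¹ 1-form on U. Then the symmetric tensor σ_{ab} = ω_a·ω_b satisfies the Killing-tensor equation ∇_{(a}σ_{bc)} = 0 on U if and only if ω satisfies the Killing equation ∇_{(a}ω_{b)} = 0 on U. (A connection admits a Killing 1-form ω if and only if σ_{ab} = ω_a ω_b is a degenerate solution of its metrisability equations.) -/
/-- Partial derivative `∂_i f` on `ℝ²` (points as `Fin 2 → ℝ`). -/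
noncomputable def pdv (i : Fin 2) (f : (Fin 2 → ℝ) → ℝ) (x : Fin 2 → ℝ) : ℝ :=
  fderiv ℝ f x (Pi.single i 1)

/-- Covariant derivative `∇_a σ_{bc}` of a `(0,2)`-tensor. -/
noncomputable def covLow (Γ : Fin 2 → Fin 2 → Fin 2 → (Fin 2 → ℝ) → ℝ)
    (σ : Fin 2 → Fin 2 → (Fin 2 → ℝ) → ℝ)
    (a b c : Fin 2) (x : Fin 2 → ℝ) : ℝ :=
  pdv a (σ b c) x - ∑ d, Γ d a b x * σ d c x - ∑ d, Γ d a c x * σ b d x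

/-- Covariant derivative `∇_a K_b` of a 1-form. -/
noncomputable def covForm (Γ : Fin 2 → Fin 2 → Fin 2 → (Fin 2 → ℝ) → ℝ)
    (K : Fin 2 → (Fin 2 → ℝ) → ℝ) (a b : Fin 2) (x : Fin 2 → ℝ) : ℝ :=
  pdv a (K b) x - ∑ c, Γ c a b x * K c x

/-- Leibniz rule for the covariant derivative of `ω ⊗ ω`. -/
theorem covLow_mul (Γ : Fin 2 → Fin 2 → Fin 2 → (Fin 2 → ℝ) → ℝ)
    (ω : Fin 2 → (Fin 2 → ℝ) → ℝ) (x : Fin 2 → ℝ)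
    (hd : ∀ a, DifferentiableAt ℝ (ω a) x) (a b c : Fin 2) :
    covLow Γ (fun a b x => ω a x * ω b x) a b c x
      = covForm Γ ω a b x * ω c x + ω b x * covForm Γ ω a c x := by
  have h : pdv a (fun x => ω b x * ω c x) x
      = ω b x * pdv a (ω c) x + ω c x * pdv a (ω b) x := by
    unfold pdv
    rw [fderiv_fun_mul (hd b) (hd c)]
    simp
  simp only [covLow, covForm, Fin.sum_univ_two, h]
  ring

/-- For a nowhere-vanishing 1-form `ω`, the tensor `σ_{ab} = ω_a ω_b` satisfies the
Killing-tensor equation `∇_{(a}σ_{bc)} = 0` iff `ω` satisfies the Killing equation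
`∇_{(a}ω_{b)} = 0`. -/
theorem killing_form_iff_degenerate_killing_tensor
    (U : Set (Fin 2 → ℝ)) (hU : IsOpen U)
    (Γ : Fin 2 → Fin 2 → Fin 2 → (Fin 2 → ℝ) → ℝ)
    (hΓsym : ∀ a b c x, Γ a b c x = Γ a c b x)
    (hΓC1 : ∀ a b c, ContDiffOn ℝ 1 (Γ a b c) U)
    (ω : Fin 2 → (Fin 2 → ℝ) → ℝ)
    (hωC1 : ∀ a, ContDiffOn ℝ 1 (ω a) U)
    (hω0 : ∀ x ∈ U, ∃ a, ω a x ≠ 0) :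
    (∀ a b c : Fin 2, ∀ x ∈ U,
        covLow Γ (fun a b x => ω a x * ω b x) a b c x
          + covLow Γ (fun a b x => ω a x * ω b x) b c a x
          + covLow Γ (fun a b x => ω a x * ω b x) c a b x
          + covLow Γ (fun a b x => ω a x * ω b x) a c b x
          + covLow Γ (fun a b x => ω a x * ω b x) b a c x
          + covLow Γ (fun a b x => ω a x * ω b x) c b a x = 0)
      ↔ (∀ a b : Fin 2, ∀ x ∈ U, covForm Γ ω a b x + covForm Γ ω b a x = 0) := by
  have hd : ∀ x ∈ U, ∀ a, DifferentiableAt ℝ (ω a) x := fun x hx a =>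
    ((hωC1 a).differentiableOn one_ne_zero).differentiableAt (hU.mem_nhds hx)
  constructor
  · intro H
    have key : ∀ x ∈ U, ∀ a b c : Fin 2,
        ω a x * (covForm Γ ω b c x + covForm Γ ω c b x)
          + ω b x * (covForm Γ ω c a x + covForm Γ ω a c x)
          + ω c x * (covForm Γ ω a b x + covForm Γ ω b a x) = 0 := by
      intro x hx a b c
      have h := H a b c x hx
      simp only [covLow_mul Γ ω x (hd x hx)] at h
      linarith
    intro b c x hx
    obtain ⟨a, ha⟩ := hω0 x hx
    have h1 : covForm Γ ω a a x + covForm Γ ω a a x = 0 := by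
      have h := key x hx a a a
      apply (mul_eq_zero.mp _).resolve_left ha
      linarith
    have h2 : ∀ d, covForm Γ ω a d x + covForm Γ ω d a x = 0 := by
      intro d
      have h := key x hx a a d
      rw [h1] at h
      apply (mul_eq_zero.mp _).resolve_left ha
      linarith
    have h := key x hx a b c
    rw [h2 b, add_comm (covForm Γ ω c a x), h2 c] at h
    apply (mul_eq_zero.mp _).resolve_left ha
    linarith
  · intro H a b c x hx
    simp only [covLow_mul Γ ω x (hd x hx)]
    linear_combination 2 * ω a x * H b c x hx + 2 * ω b x * H c a x hx
      + 2 * ω c x * H a b x hx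
end

section
/- Let Γ^a_{bc} be a torsion-free affine connection of class C⁴ on an open set U ⊆ ℝ², with ε_{ab}, ε^{ab}, θ_a, P_{ab}, P^b{}_a and β as in the context. A C¹ 1-form K on U satisfies the Killing equation ∇_{(a}K_{b)} = 0 if and only if there exists a function μ : U → ℝ such that for all indices a, b: ∇_a K_b − ε_{ab}·μ = 0 and ∂_a μ − (P^b{}_a + ½β·δ^b_a)·K_b + μ·θ_a = 0. Moreover such μ is unique, namely μ = ½ε^{ab}∇_a K_b, so that solutions of the Killing equation are in one-to-one correspondence with parallel sections of the prolongation connection D. -/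
/-- Covariant derivative `∇_a ε_{bc}` of a 2-form. -/
noncomputable def covTwo (Γ : Fin 2 → Fin 2 → Fin 2 → (Fin 2 → ℝ) → ℝ)
    (ε : Fin 2 → Fin 2 → (Fin 2 → ℝ) → ℝ) (a b c : Fin 2) (x : Fin 2 → ℝ) : ℝ :=
  pdv a (ε b c) x - ∑ d, Γ d a b x * ε d c x - ∑ d, Γ d a c x * ε b d x

/-- Curvature `R_{ab}{}^c{}_d` of the connection `Γ`. -/
noncomputable def riem (Γ : Fin 2 → Fin 2 → Fin 2 → (Fin 2 → ℝ) → ℝ)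
    (a b c d : Fin 2) (x : Fin 2 → ℝ) : ℝ :=
  pdv a (Γ c b d) x - pdv b (Γ c a d) x
    + ∑ e, Γ c a e x * Γ e b d x - ∑ e, Γ c b e x * Γ e a d x

/-- Ricci tensor `R_{ab} = R_{ca}{}^c{}_b`. -/
noncomputable def ricci (Γ : Fin 2 → Fin 2 → Fin 2 → (Fin 2 → ℝ) → ℝ)
    (a b : Fin 2) (x : Fin 2 → ℝ) : ℝ :=
  ∑ c, riem Γ c a c b x

/-- Projective Schouten tensor `P_{ab} = (2/3)R_{ab} + (1/3)R_{ba}`. -/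
noncomputable def schouten (Γ : Fin 2 → Fin 2 → Fin 2 → (Fin 2 → ℝ) → ℝ)
    (a b : Fin 2) (x : Fin 2 → ℝ) : ℝ :=
  (2 / 3) * ricci Γ a b x + (1 / 3) * ricci Γ b a x

/-- `β = B_{ab} ε^{ab}` where `B_{ab} = P_{ba} − P_{ab}`. -/
noncomputable def betaInv (Γ : Fin 2 → Fin 2 → Fin 2 → (Fin 2 → ℝ) → ℝ)
    (εUp : Fin 2 → Fin 2 → (Fin 2 → ℝ) → ℝ) (x : Fin 2 → ℝ) : ℝ :=
  ∑ a, ∑ b, (schouten Γ b a x - schouten Γ a b x) * εUp a b x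

/-- `θ_a = ½ ε^{bc} ∇_a ε_{bc}`. -/
noncomputable def thetaForm (Γ : Fin 2 → Fin 2 → Fin 2 → (Fin 2 → ℝ) → ℝ)
    (ε εUp : Fin 2 → Fin 2 → (Fin 2 → ℝ) → ℝ) (a : Fin 2) (x : Fin 2 → ℝ) : ℝ :=
  (1 / 2) * ∑ b, ∑ c, εUp b c x * covTwo Γ ε a b c x

/-- `P^b{}_a = ε^{bc} P_{ca}`. -/
noncomputable def schoutenUp (Γ : Fin 2 → Fin 2 → Fin 2 → (Fin 2 → ℝ) → ℝ)
    (εUp : Fin 2 → Fin 2 → (Fin 2 → ℝ) → ℝ) (b a : Fin 2) (x : Fin 2 → ℝ) : ℝ :=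
  ∑ c, εUp b c x * schouten Γ c a x

/-- `h` has strict partial derivative `c` at `p` in direction `e`. -/
def StrictPartial {E : Type*} [NormedAddCommGroup E] [NormedSpace ℝ E]
    (h : E → ℝ) (e : E) (c : ℝ) (p : E) : Prop :=
  ∀ r : ℝ, 0 < r → ∃ d : ℝ, 0 < d ∧ ∀ (q : E) (t : ℝ), q ∈ Metric.ball p d →
    q + t • e ∈ Metric.ball p d → |h (q + t • e) - h q - t * c| ≤ r * |t|

section
variable {E : Type*} [NormedAddCommGroup E] [NormedSpace ℝ E]

lemma strictFD_bound {h : E → ℝ} {L : E →L[ℝ] ℝ} {p : E} (H : HasStrictFDerivAt h L p)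
    {r : ℝ} (hr : 0 < r) : ∃ d : ℝ, 0 < d ∧ ∀ x ∈ Metric.ball p d, ∀ y ∈ Metric.ball p d,
      |h x - h y - L (x - y)| ≤ r * ‖x - y‖ := by
  have h1 := (H.isLittleO.bound hr)
  rw [nhds_prod_eq] at h1
  obtain ⟨s, hs, hs'⟩ := (Filter.eventually_prod_self_iff (r := fun x y => ‖h x - h y - L (x - y)‖ ≤ r * ‖x - y‖)).1 h1
  obtain ⟨d, hd, hd'⟩ := Metric.mem_nhds_iff.1 hs
  exact ⟨d, hd, fun x hx y hy => hs' x (hd' hx) y (hd' hy)⟩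

lemma StrictPartial.of_strict {h : E → ℝ} {L : E →L[ℝ] ℝ} {p : E}
    (H : HasStrictFDerivAt h L p) (e : E) : StrictPartial h e (L e) p := by
  intro r hr
  obtain ⟨d, hd, hb⟩ := strictFD_bound H (r := r / (‖e‖ + 1)) (by positivity)
  refine ⟨d, hd, fun q t hq hqt => ?_⟩
  have h1 := hb _ hqt _ hq
  simp only [add_sub_cancel_left, map_smul, smul_eq_mul, norm_smul, Real.norm_eq_abs] at h1
  refine h1.trans ?_
  rw [div_mul_eq_mul_div, div_le_iff₀ (by positivity)]
  have : 0 ≤ r * |t| := by positivity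
  nlinarith [norm_nonneg e]

lemma StrictPartial.sub {h k : E → ℝ} {e p : E} {c c' : ℝ} (H : StrictPartial h e c p)
    (H' : StrictPartial k e c' p) : StrictPartial (fun x => h x - k x) e (c - c') p := by
  intro r hr
  obtain ⟨d, hd, hb⟩ := H (r / 2) (by positivity)
  obtain ⟨d', hd', hb'⟩ := H' (r / 2) (by positivity)
  refine ⟨min d d', lt_min hd hd', fun q t hq hqt => ?_⟩
  have h1 := hb q t (Metric.ball_subset_ball (min_le_left _ _) hq)
    (Metric.ball_subset_ball (min_le_left _ _) hqt)
  have h2 := hb' q t (Metric.ball_subset_ball (min_le_right _ _) hq)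
    (Metric.ball_subset_ball (min_le_right _ _) hqt)
  rw [abs_le] at *
  constructor <;> linarith [h1.1, h1.2, h2.1, h2.2]

lemma StrictPartial.congr {h k : E → ℝ} {e p : E} {c : ℝ} (H : StrictPartial h e c p)
    {U : Set E} (hU : IsOpen U) (hp : p ∈ U) (hk : ∀ x ∈ U, k x = h x) :
    StrictPartial k e c p := by
  intro r hr
  obtain ⟨d, hd, hb⟩ := H r hr
  obtain ⟨d', hd', hb'⟩ := Metric.isOpen_iff.1 hU p hp
  refine ⟨min d d', lt_min hd hd', fun q t hq hqt => ?_⟩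
  rw [hk _ (hb' (Metric.ball_subset_ball (min_le_right _ _) hq)),
    hk _ (hb' (Metric.ball_subset_ball (min_le_right _ _) hqt))]
  exact hb q t (Metric.ball_subset_ball (min_le_left _ _) hq)
    (Metric.ball_subset_ball (min_le_left _ _) hqt)

/-- Mixed partials (Peano). -/
lemma StrictPartial.mixed {f g : E → ℝ} {G : E →L[ℝ] ℝ} {p e e' : E} {U : Set E}
    (hU : IsOpen U) (hp : p ∈ U) (hf : ∀ x ∈ U, DifferentiableAt ℝ f x)
    (hg : ∀ x ∈ U, fderiv ℝ f x e = g x) (H : HasStrictFDerivAt g G p) :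
    StrictPartial (fun x => fderiv ℝ f x e') e (G e') p := by
  intro r hr
  obtain ⟨d, hd, hb⟩ := strictFD_bound H (r := r / (‖e'‖ + 1)) (by positivity)
  obtain ⟨d', hd', hb'⟩ := Metric.isOpen_iff.1 hU p hp
  set B := Metric.ball p (min d d') with hB
  have hBd : ∀ x ∈ B, x ∈ Metric.ball p d := Metric.ball_subset_ball (min_le_left _ _)
  have hBU : ∀ x ∈ B, x ∈ U := fun x hx => hb' (Metric.ball_subset_ball (min_le_right _ _) hx)
  refine ⟨min d d', lt_min hd hd', fun q t hq hqt => ?_⟩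
  have hop : IsOpen B := Metric.isOpen_ball
  have hline : ∀ (z v : E) (τ : ℝ), HasDerivAt (fun τ : ℝ => z + τ • v) v τ := by
    intro z v τ
    simpa using ((hasDerivAt_id τ).smul_const v).const_add z
  have hconv : ∀ z v : E, ∀ t : ℝ, z ∈ B → z + t • v ∈ B → ∀ τ ∈ Set.uIcc 0 t, z + τ • v ∈ B := by
    intro z v t hz hzt τ hτ
    have hc : Convex ℝ ((fun τ : ℝ => z + τ • v) ⁻¹' B) := by
      intro s hs u hu a b ha hb hab
      have h1 := convex_ball p (min d d') hs hu ha hb hab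
      have h2 : a • (z + s • v) + b • (z + u • v) = z + (a • s + b • u) • v := by
        have h3 : z = (a + b) • z := by rw [hab, one_smul]
        conv_rhs => rw [h3]
        module
      rw [Set.mem_preimage, ← h2]
      exact h1
    exact hc.ordConnected.uIcc_subset (by simpa using hz) hzt hτ
  have hmain : ∀ s : ℝ, q + s • e' ∈ B → (q + t • e) + s • e' ∈ B →
      |(f (q + t • e + s • e') - f (q + s • e') - s * (t * G e')) - (f (q + t • e) - f q)|
        ≤ r * |t| * |s| := by
    intro s h1 h2
    have hder : ∀ τ ∈ Set.uIcc 0 t, HasDerivWithinAt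
        (fun τ : ℝ => f (q + s • e' + τ • e) - f (q + τ • e) - τ * (s * G e'))
        (g (q + s • e' + τ • e) - g (q + τ • e) - s * G e') (Set.uIcc 0 t) τ := by
      intro τ hτ
      have m1 := hconv (q + s • e') e t h1 (by rwa [add_right_comm]) τ hτ
      have m2 := hconv q e t hq hqt τ hτ
      have d1 := (hf _ (hBU _ m1)).hasFDerivAt.comp_hasDerivAt τ (hline (q + s • e') e τ)
      have d2 := (hf _ (hBU _ m2)).hasFDerivAt.comp_hasDerivAt τ (hline q e τ)
      rw [hg _ (hBU _ m1)] at d1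
      rw [hg _ (hBU _ m2)] at d2
      have d3 := (hasDerivAt_id τ).mul_const (s * G e')
      rw [one_mul] at d3
      exact ((d1.sub d2).sub d3).hasDerivWithinAt
    have hbd : ∀ τ ∈ Set.uIcc 0 t,
        ‖g (q + s • e' + τ • e) - g (q + τ • e) - s * G e'‖ ≤ r * |s| := by
      intro τ hτ
      have m1 := hconv (q + s • e') e t h1 (by rwa [add_right_comm]) τ hτ
      have m2 := hconv q e t hq hqt τ hτ
      have h3 := hb _ (hBd _ m1) _ (hBd _ m2)
      have : q + s • e' + τ • e - (q + τ • e) = s • e' := by abel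
      rw [this, map_smul, smul_eq_mul, norm_smul, Real.norm_eq_abs] at h3
      refine h3.trans ?_
      rw [div_mul_eq_mul_div, div_le_iff₀ (by positivity)]
      have : 0 ≤ r * |s| := by positivity
      nlinarith [norm_nonneg e']
    have := (convex_uIcc (0:ℝ) t).norm_image_sub_le_of_norm_hasDerivWithin_le hder hbd
      Set.left_mem_uIcc Set.right_mem_uIcc
    simp only [zero_smul, add_zero, zero_mul, sub_zero, Real.norm_eq_abs] at this
    rw [add_right_comm q (s • e')] at this
    calc _ = _ := by congr 1; ring
      _ ≤ _ := this
      _ = _ := by ring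
  have d1 := (hf _ (hBU _ hqt))
  have d2 := (hf _ (hBU _ hq))
  have hψ : HasDerivAt (fun s : ℝ => f (q + t • e + s • e') - f (q + s • e') - s * (t * G e'))
      (fderiv ℝ f (q + t • e) e' - fderiv ℝ f q e' - t * G e') 0 := by
    have l1 := HasFDerivAt.comp_hasDerivAt (0:ℝ) (by simpa using d1.hasFDerivAt)
      (hline (q + t • e) e' 0)
    have l2 := HasFDerivAt.comp_hasDerivAt (0:ℝ) (by simpa using d2.hasFDerivAt)
      (hline q e' 0)
    have d3 := (hasDerivAt_id (0:ℝ)).mul_const (t * G e')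
    rw [one_mul] at d3
    exact (l1.sub l2).sub d3
  have ev : ∀ z ∈ B, ∀ᶠ s in nhds (0:ℝ), z + s • e' ∈ B := by
    intro z hz
    exact (hline z e' 0).continuousAt.eventually_mem (hop.mem_nhds (by simpa using hz))
  have h := hψ.hasFDerivAt.le_of_lip' (C := r * |t|) (by positivity) (by
    filter_upwards [ev _ hq, ev _ hqt] with s hs1 hs2
    have := hmain s hs1 hs2
    simpa using this)
  simpa using h

end

lemma hasFDerivAt_of_strictPartial {h : (Fin 2 → ℝ) → ℝ} {c : Fin 2 → ℝ} {p : Fin 2 → ℝ}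
    (H : ∀ i, StrictPartial h (Pi.single i 1) (c i) p) :
    ∃ L : (Fin 2 → ℝ) →L[ℝ] ℝ, HasFDerivAt h L p ∧ ∀ i, L (Pi.single i 1) = c i := by
  refine ⟨c 0 • ContinuousLinearMap.proj 0 + c 1 • ContinuousLinearMap.proj 1, ?_, ?_⟩
  · rw [hasFDerivAt_iff_isLittleO, Asymptotics.isLittleO_iff]
    intro r hr
    obtain ⟨d, hd, hb⟩ := H 0 (r / 2) (by positivity)
    obtain ⟨d', hd', hb'⟩ := H 1 (r / 2) (by positivity)
    filter_upwards [Metric.ball_mem_nhds p (lt_min hd hd')] with x hx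
    have hx0 : |x 0 - p 0| ≤ ‖x - p‖ := norm_le_pi_norm (x - p) 0
    have hx1 : |x 1 - p 1| ≤ ‖x - p‖ := norm_le_pi_norm (x - p) 1
    have hxn : ‖x - p‖ < min d d' := by simpa [dist_eq_norm] using hx
    set y : Fin 2 → ℝ := p + (x 0 - p 0) • Pi.single 0 1 with hy
    have hyx : y + (x 1 - p 1) • Pi.single 1 1 = x := by
      ext i; fin_cases i <;> simp [hy]
    have hyn : ‖y - p‖ ≤ ‖x - p‖ := by
      rw [pi_norm_le_iff_of_nonneg (norm_nonneg _)]
      intro i; fin_cases i <;> simp [hy, hx0]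
    have my : y ∈ Metric.ball p (min d d') := by
      rw [Metric.mem_ball, dist_eq_norm]; linarith
    have h1 := hb p (x 0 - p 0) (Metric.mem_ball_self hd)
      (Metric.ball_subset_ball (min_le_left _ _) my)
    have h2 := hb' y (x 1 - p 1) (Metric.ball_subset_ball (min_le_right _ _) my)
      (by rw [hyx]; exact Metric.ball_subset_ball (min_le_right _ _) hx)
    rw [hyx] at h2
    rw [← hy] at h1
    have h3 : |h y - h p - (x 0 - p 0) * c 0| ≤ r / 2 * ‖x - p‖ :=
      h1.trans (by gcongr)
    have h4 : |h x - h y - (x 1 - p 1) * c 1| ≤ r / 2 * ‖x - p‖ :=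
      h2.trans (by gcongr)
    simp only [add_apply, smul_apply,
      ContinuousLinearMap.proj_apply, Pi.sub_apply, smul_eq_mul, Real.norm_eq_abs]
    change _ ≤ r * ‖x - p‖
    rw [abs_le] at *
    constructor <;> linarith [h3.1, h3.2, h4.1, h4.2]
  · intro i; fin_cases i <;> simp

lemma pdv_mul {f g : (Fin 2 → ℝ) → ℝ} {x : Fin 2 → ℝ} (hf : DifferentiableAt ℝ f x)
    (hg : DifferentiableAt ℝ g x) (i : Fin 2) :
    pdv i (fun y => f y * g y) x = pdv i f x * g x + f x * pdv i g x := by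
  unfold pdv
  rw [fderiv_fun_mul hf hg]
  simp; ring

lemma pdv_add {f g : (Fin 2 → ℝ) → ℝ} {x : Fin 2 → ℝ} (hf : DifferentiableAt ℝ f x)
    (hg : DifferentiableAt ℝ g x) (i : Fin 2) :
    pdv i (fun y => f y + g y) x = pdv i f x + pdv i g x := by
  unfold pdv
  rw [fderiv_fun_add hf hg]
  simp

/-- Solutions of the Killing equation `∇_{(a}K_{b)} = 0` correspond exactly to parallel
sections `(K, μ)` of the prolongation connection `D`, with `μ = ½ ε^{ab} ∇_a K_b`. -/
theorem killing_iff_parallel_section_of_prolongation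
    (U : Set (Fin 2 → ℝ)) (hU : IsOpen U)
    (Γ : Fin 2 → Fin 2 → Fin 2 → (Fin 2 → ℝ) → ℝ)
    (hΓsym : ∀ a b c x, Γ a b c x = Γ a c b x)
    (hΓ : ∀ a b c, ContDiffOn ℝ 4 (Γ a b c) U)
    (ε εUp : Fin 2 → Fin 2 → (Fin 2 → ℝ) → ℝ)
    (hskew : ∀ a b x, ε a b x = -ε b a x)
    (hεsmooth : ∀ a b, ContDiffOn ℝ (⊤ : ℕ∞) (ε a b) U)
    (hε0 : ∀ x ∈ U, ε 0 1 x ≠ 0)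
    (hεUp : ∀ a c : Fin 2, ∀ x ∈ U,
      ∑ b, εUp a b x * ε c b x = if a = c then (1 : ℝ) else 0)
    (K : Fin 2 → (Fin 2 → ℝ) → ℝ)
    (hK : ∀ a, ContDiffOn ℝ 1 (K a) U) :
    ((∀ a b : Fin 2, ∀ x ∈ U, covForm Γ K a b x + covForm Γ K b a x = 0)
      ↔ ∃ μ : (Fin 2 → ℝ) → ℝ,
          (∀ a b : Fin 2, ∀ x ∈ U, covForm Γ K a b x - ε a b x * μ x = 0) ∧
          (∀ a : Fin 2, ∀ x ∈ U,
            pdv a μ x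
              - (∑ b, (schoutenUp Γ εUp b a x
                  + (1 / 2) * betaInv Γ εUp x * (if b = a then (1 : ℝ) else 0)) * K b x)
              + μ x * thetaForm Γ ε εUp a x = 0))
    ∧ (∀ μ : (Fin 2 → ℝ) → ℝ,
        ((∀ a b : Fin 2, ∀ x ∈ U, covForm Γ K a b x - ε a b x * μ x = 0) ∧
         (∀ a : Fin 2, ∀ x ∈ U,
            pdv a μ x
              - (∑ b, (schoutenUp Γ εUp b a x
                  + (1 / 2) * betaInv Γ εUp x * (if b = a then (1 : ℝ) else 0)) * K b x)
              + μ x * thetaForm Γ ε εUp a x = 0)) →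
        ∀ x ∈ U, μ x = (1 / 2) * ∑ a, ∑ b, εUp a b x * covForm Γ K a b x) := by
  have e01 : ∀ x ∈ U, εUp 0 1 x * ε 0 1 x = 1 ∧ εUp 1 0 x * ε 0 1 x = -1 ∧
      εUp 0 0 x = 0 ∧ εUp 1 1 x = 0 ∧ ε 0 0 x = 0 ∧ ε 1 1 x = 0 ∧ ε 1 0 x = - ε 0 1 x := by
    intro x hx
    have h0 := hε0 x hx
    have z0 : ε 0 0 x = 0 := by linarith [hskew 0 0 x]
    have z1 : ε 1 1 x = 0 := by linarith [hskew 1 1 x]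
    have z2 : ε 1 0 x = - ε 0 1 x := hskew 1 0 x
    have a := hεUp 0 0 x hx
    have b := hεUp 0 1 x hx
    have c := hεUp 1 0 x hx
    have d := hεUp 1 1 x hx
    simp [Fin.sum_univ_two, z0, z1, z2, h0] at a b c d
    exact ⟨a, by linarith, b, c, z0, z1, z2⟩
  have uniq : ∀ μ : (Fin 2 → ℝ) → ℝ,
      (∀ a b : Fin 2, ∀ x ∈ U, covForm Γ K a b x - ε a b x * μ x = 0) →
      ∀ x ∈ U, μ x = (1 / 2) * ∑ a, ∑ b, εUp a b x * covForm Γ K a b x := by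
    intro μ h x hx
    obtain ⟨u1, u2, u3, u4, z0, z1, z2⟩ := e01 x hx
    have h1 : covForm Γ K 0 1 x = ε 0 1 x * μ x := by linarith [h 0 1 x hx]
    have h2 : covForm Γ K 1 0 x = - ε 0 1 x * μ x := by
      have := h 1 0 x hx
      rw [z2] at this; linarith
    simp only [Fin.sum_univ_two, u3, u4, h1, h2]
    linear_combination (-1/2 * μ x) * u1 + (1/2 * μ x) * u2
  refine ⟨⟨fun hkill => ?_, ?_⟩, fun μ h => uniq μ h.1⟩
  swap
  · rintro ⟨μ, h, -⟩ a b x hx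
    have h1 := h a b x hx
    have h2 := h b a x hx
    rw [hskew b a x] at h2
    linarith
  have nU : ∀ x ∈ U, U ∈ nhds x := fun x hx => hU.mem_nhds hx
  have dΓ : ∀ a b c, ∀ x ∈ U, DifferentiableAt ℝ (Γ a b c) x := fun a b c x hx =>
    ((hΓ a b c).contDiffAt (nU x hx)).differentiableAt (by norm_num)
  have dK : ∀ a, ∀ x ∈ U, DifferentiableAt ℝ (K a) x := fun a x hx =>
    ((hK a).contDiffAt (nU x hx)).differentiableAt (by norm_num)
  have dε : ∀ a b, ∀ x ∈ U, DifferentiableAt ℝ (ε a b) x := fun a b x hx =>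
    ((hεsmooth a b).contDiffAt (nU x hx)).differentiableAt (by norm_num)
  -- the contraction `Γ^c_{ab} K_c`
  let A : Fin 2 → Fin 2 → (Fin 2 → ℝ) → ℝ :=
    fun a b x => Γ 0 a b x * K 0 x + Γ 1 a b x * K 1 x
  have hcov : ∀ a b x, covForm Γ K a b x = pdv a (K b) x - A a b x := by
    intro a b x; simp [covForm, A, Fin.sum_univ_two]
  have hAs : ∀ a b, ∀ x ∈ U, HasStrictFDerivAt (A a b) (fderiv ℝ (A a b) x) x := by
    intro a b x hx
    have k : ∀ c, ContDiffAt ℝ 1 (K c) x := fun c => (hK c).contDiffAt (nU x hx)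
    have g : ∀ c, ContDiffAt ℝ 1 (Γ c a b) x := fun c =>
      ((hΓ c a b).contDiffAt (nU x hx)).of_le (by norm_num)
    have : ContDiffAt ℝ 1 (A a b) x := ((g 0).mul (k 0)).add ((g 1).mul (k 1))
    exact this.hasStrictFDerivAt (by norm_num)
  have hA : ∀ i a b, ∀ x ∈ U, pdv i (A a b) x =
      pdv i (Γ 0 a b) x * K 0 x + Γ 0 a b x * pdv i (K 0) x +
      (pdv i (Γ 1 a b) x * K 1 x + Γ 1 a b x * pdv i (K 1) x) := by
    intro i a b x hx
    rw [← pdv_mul (dΓ _ _ _ x hx) (dK _ x hx), ← pdv_mul (dΓ _ _ _ x hx) (dK _ x hx)]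
    exact pdv_add ((dΓ _ _ _ x hx).mul (dK _ x hx)) ((dΓ _ _ _ x hx).mul (dK _ x hx)) i
  have hAsym : A 1 0 = A 0 1 := by
    funext x; simp only [A]; rw [hΓsym 0 1 0, hΓsym 1 1 0]
  have k00 : ∀ x ∈ U, pdv 0 (K 0) x = A 0 0 x := fun x hx => by
    have := hkill 0 0 x hx; rw [hcov] at this; linarith
  have k11 : ∀ x ∈ U, pdv 1 (K 1) x = A 1 1 x := fun x hx => by
    have := hkill 1 1 x hx; rw [hcov] at this; linarith
  have k01 : ∀ x ∈ U, pdv 0 (K 1) x - A 0 1 x = A 0 1 x - pdv 1 (K 0) x := fun x hx => by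
    have := hkill 0 1 x hx; rw [hcov, hcov, hAsym] at this; linarith
  let m : (Fin 2 → ℝ) → ℝ := fun x => pdv 0 (K 1) x - A 0 1 x
  have hm : ∀ x ∈ U, DifferentiableAt ℝ m x ∧
      pdv 0 m x = pdv 0 (A 0 1) x - pdv 1 (A 0 0) x ∧
      pdv 1 m x = pdv 0 (A 1 1) x - pdv 1 (A 0 1) x := by
    intro x hx
    have s0 : StrictPartial m (Pi.single 0 1) (pdv 0 (A 0 1) x - pdv 1 (A 0 0) x) x := by
      refine StrictPartial.congr (h := fun y => A 0 1 y - pdv 1 (K 0) y) ?_ hU hx k01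
      exact (StrictPartial.of_strict (hAs 0 1 x hx) _).sub
        (StrictPartial.mixed hU hx (dK 0) k00 (hAs 0 0 x hx))
    have s1 : StrictPartial m (Pi.single 1 1) (pdv 0 (A 1 1) x - pdv 1 (A 0 1) x) x :=
      (StrictPartial.mixed hU hx (dK 1) k11 (hAs 1 1 x hx)).sub
        (StrictPartial.of_strict (hAs 0 1 x hx) _)
    obtain ⟨L, hL, hc⟩ := hasFDerivAt_of_strictPartial (h := m) (p := x)
      (c := ![pdv 0 (A 0 1) x - pdv 1 (A 0 0) x, pdv 0 (A 1 1) x - pdv 1 (A 0 1) x])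
      (by intro i; fin_cases i; exacts [s0, s1])
    refine ⟨hL.differentiableAt, ?_, ?_⟩
    · have := hc 0; rw [pdv, hL.fderiv]; simpa using this
    · have := hc 1; rw [pdv, hL.fderiv]; simpa using this
  let μ : (Fin 2 → ℝ) → ℝ := fun x => m x * (ε 0 1 x)⁻¹
  have hμ : ∀ x, μ x = m x * (ε 0 1 x)⁻¹ := fun x => rfl
  have hμm : ∀ x ∈ U, m x = μ x * ε 0 1 x := fun x hx => by
    rw [hμ, inv_mul_cancel_right₀ (hε0 x hx)]
  have dμ : ∀ x ∈ U, DifferentiableAt ℝ μ x := fun x hx =>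
    (hm x hx).1.mul ((dε 0 1 x hx).inv (hε0 x hx))
  have pm : ∀ i, ∀ x ∈ U, pdv i m x = pdv i μ x * ε 0 1 x + μ x * pdv i (ε 0 1) x := by
    intro i x hx
    rw [← pdv_mul (dμ x hx) (dε 0 1 x hx)]
    unfold pdv
    rw [Filter.EventuallyEq.fderiv_eq (Filter.eventually_of_mem (nU x hx) hμm)]
  have p01 : ∀ x ∈ U, pdv 0 (K 1) x = A 0 1 x + μ x * ε 0 1 x := fun x hx => by
    rw [← hμm x hx]; simp only [m]; ring
  have p10 : ∀ x ∈ U, pdv 1 (K 0) x = A 0 1 x - μ x * ε 0 1 x := fun x hx => by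
    linarith [k01 x hx, p01 x hx]
  have pe : ∀ i, ∀ x, pdv i (ε 1 0) x = - pdv i (ε 0 1) x := by
    intro i x
    have : ε 1 0 = fun y => - ε 0 1 y := by funext y; exact hskew 1 0 y
    rw [this]; unfold pdv; rw [fderiv_fun_neg]; simp
  refine ⟨μ, ?_, ?_⟩
  · intro a b x hx
    obtain ⟨u1, u2, u3, u4, z0, z1, z2⟩ := e01 x hx
    rw [hcov]
    fin_cases a <;> fin_cases b <;> simp only [Fin.zero_eta, Fin.mk_one]
    · rw [k00 x hx, z0]; ring
    · rw [p01 x hx]; ring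
    · rw [p10 x hx, hAsym, z2]; ring
    · rw [k11 x hx, z1]; ring
  · intro a x hx
    obtain ⟨u1, u2, u3, u4, z0, z1, z2⟩ := e01 x hx
    have h0 := hε0 x hx
    have v1 : εUp 0 1 x = (ε 0 1 x)⁻¹ := eq_inv_of_mul_eq_one_left u1
    have v2 : εUp 1 0 x = -(ε 0 1 x)⁻¹ := by
      rw [← neg_eq_iff_eq_neg]; exact eq_inv_of_mul_eq_one_left (by linarith)
    have g0 : Γ 0 1 0 = Γ 0 0 1 := by funext y; exact hΓsym 0 1 0 y
    have g1 : Γ 1 1 0 = Γ 1 0 1 := by funext y; exact hΓsym 1 1 0 y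
    have q0 := pm 0 x hx
    have q1 := pm 1 x hx
    rw [(hm x hx).2.1, hA _ _ _ x hx, hA _ _ _ x hx, k00 x hx, k11 x hx, p01 x hx, p10 x hx] at q0
    rw [(hm x hx).2.2, hA _ _ _ x hx, hA _ _ _ x hx, k00 x hx, k11 x hx, p01 x hx, p10 x hx] at q1
    have r0 : pdv 0 μ x = (pdv 0 μ x * ε 0 1 x + μ x * pdv 0 (ε 0 1) x
        - μ x * pdv 0 (ε 0 1) x) * (ε 0 1 x)⁻¹ := by field_simp; ring
    have r1 : pdv 1 μ x = (pdv 1 μ x * ε 0 1 x + μ x * pdv 1 (ε 0 1) x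
        - μ x * pdv 1 (ε 0 1) x) * (ε 0 1 x)⁻¹ := by field_simp; ring
    rw [← q0] at r0
    rw [← q1] at r1
    have hinv : ε 0 1 x * (ε 0 1 x)⁻¹ = 1 := mul_inv_cancel₀ h0
    fin_cases a
    · simp only [Fin.zero_eta, Fin.mk_one, r0, schoutenUp, betaInv, thetaForm, covTwo, schouten, ricci, riem,
        Fin.sum_univ_two, u3, u4, v1, v2, z0, z1, z2, pe, g0, g1, A]
      simp
      field_simp
      ring
    · simp only [Fin.zero_eta, Fin.mk_one, r1, schoutenUp, betaInv, thetaForm, covTwo, schouten, ricci, riem,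
        Fin.sum_univ_two, u3, u4, v1, v2, z0, z1, z2, pe, g0, g1, A]
      simp
      field_simp
      ring
end

section
/- Let U ⊆ ℝ² be open with coordinates (X¹, X²), let λ¹, λ² : U → ℝ be C² with λ¹ ≠ λ² pointwise, set A = ∂₂λ¹/(λ² − λ¹) and B = ∂₁λ²/(λ¹ − λ²), and assume A and B are C¹ and nowhere vanishing. Let Γ be the torsion-free connection with nonzero components Γ¹₁₁ = ∂₁A/A − 2B, Γ²₂₂ = ∂₂B/B − 2A, Γ¹₁₂ = Γ¹₂₁ = −(½∂₂A/A + A), Γ²₁₂ = Γ²₂₁ = −(½∂₁B/B + B), and Γ¹₂₂ = Γ²₁₁ = 0. Then C¹ functions f, k : U → ℝ satisfy the three equations ∂₂k + 2Ak = 0, ∂₁f + 2Bf = 0, and (∂₂A + A²)f + (∂₁B + B²)k + ½A∂₂f + ½B∂₁k = 0 if and only if the 1-form K with components K₁ = A·f, K₂ = B·k satisfies the Killing equations ∇_{(a}K_{b)} = 0 for Γ. (Hence the Hamiltonian structures of the hydrodynamic-type system with characteristic velocities λ¹, λ² correspond exactly to linear first integrals of Γ.) -/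
/-- The connection (4.5) of the text built from `A` and `B`: nonzero components
`Γ¹₁₁ = ∂₁A/A − 2B`, `Γ²₂₂ = ∂₂B/B − 2A`, `Γ¹₁₂ = −(½∂₂A/A + A)`,
`Γ²₁₂ = −(½∂₁B/B + B)` (index `0 ↔ 1`, `1 ↔ 2`). -/
noncomputable def gammaAB (A B : (Fin 2 → ℝ) → ℝ) :
    Fin 2 → Fin 2 → Fin 2 → (Fin 2 → ℝ) → ℝ :=
  fun a b c x =>
    if a = 0 then
      (if b = 0 ∧ c = 0 then pdv 0 A x / A x - 2 * B x
       else if b ≠ c then -((1 / 2) * pdv 1 A x / A x + A x)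
       else 0)
    else
      (if b = 1 ∧ c = 1 then pdv 1 B x / B x - 2 * A x
       else if b ≠ c then -((1 / 2) * pdv 0 B x / B x + B x)
       else 0)

/-- Leibniz rule for the partial derivatives. -/
theorem pdv_mul_aux (U : Set (Fin 2 → ℝ)) (hU : IsOpen U) (g h : (Fin 2 → ℝ) → ℝ)
    (hg : ContDiffOn ℝ 1 g U) (hh : ContDiffOn ℝ 1 h U) (i : Fin 2)
    (x : Fin 2 → ℝ) (hx : x ∈ U) :
    pdv i (fun y => g y * h y) x = g x * pdv i h x + h x * pdv i g x := by
  have h1 : DifferentiableAt ℝ g x :=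
    (hg.differentiableOn (by norm_num)).differentiableAt (hU.mem_nhds hx)
  have h2 : DifferentiableAt ℝ h x :=
    (hh.differentiableOn (by norm_num)).differentiableAt (hU.mem_nhds hx)
  unfold pdv
  rw [fderiv_fun_mul h1 h2]
  simp

/-- Hamiltonian formulations of the hydrodynamic-type system with characteristic
velocities `λ¹, λ²`, i.e. solutions `(f, k)` of `∂₂k + 2Ak = 0`, `∂₁f + 2Bf = 0`
and the flatness condition, correspond exactly to Killing 1-forms
`K = (Af, Bk)` of the connection `gammaAB A B`. -/
theorem hamiltonian_structures_iff_killing_forms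
    (U : Set (Fin 2 → ℝ)) (hU : IsOpen U)
    (lam1 lam2 : (Fin 2 → ℝ) → ℝ)
    (hlam1 : ContDiffOn ℝ 2 lam1 U) (hlam2 : ContDiffOn ℝ 2 lam2 U)
    (hne : ∀ x ∈ U, lam1 x ≠ lam2 x)
    (A B : (Fin 2 → ℝ) → ℝ)
    (hA : ∀ x ∈ U, A x = pdv 1 lam1 x / (lam2 x - lam1 x))
    (hB : ∀ x ∈ U, B x = pdv 0 lam2 x / (lam1 x - lam2 x))
    (hAC1 : ContDiffOn ℝ 1 A U) (hBC1 : ContDiffOn ℝ 1 B U)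
    (hA0 : ∀ x ∈ U, A x ≠ 0) (hB0 : ∀ x ∈ U, B x ≠ 0)
    (f k : (Fin 2 → ℝ) → ℝ)
    (hf : ContDiffOn ℝ 1 f U) (hk : ContDiffOn ℝ 1 k U) :
    ((∀ x ∈ U, pdv 1 k x + 2 * A x * k x = 0)
      ∧ (∀ x ∈ U, pdv 0 f x + 2 * B x * f x = 0)
      ∧ (∀ x ∈ U,
          (pdv 1 A x + (A x) ^ 2) * f x + (pdv 0 B x + (B x) ^ 2) * k x
            + (1 / 2) * A x * pdv 1 f x + (1 / 2) * B x * pdv 0 k x = 0))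
    ↔ (∀ a b : Fin 2, ∀ x ∈ U,
        covForm (gammaAB A B) ![fun y => A y * f y, fun y => B y * k y] a b x
          + covForm (gammaAB A B) ![fun y => A y * f y, fun y => B y * k y] b a x
          = 0) := by
  have LA := fun i x hx => pdv_mul_aux U hU A f hAC1 hf i x hx
  have LB := fun i x hx => pdv_mul_aux U hU B k hBC1 hk i x hx
  set K : Fin 2 → (Fin 2 → ℝ) → ℝ := ![fun y => A y * f y, fun y => B y * k y] with hK
  have c00 : ∀ x ∈ U, covForm (gammaAB A B) K 0 0 x
      = A x * (pdv 0 f x + 2 * B x * f x) := by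
    intro x hx
    have := hA0 x hx
    simp [covForm, gammaAB, hK, LA 0 x hx]
    field_simp
    ring
  have c11 : ∀ x ∈ U, covForm (gammaAB A B) K 1 1 x
      = B x * (pdv 1 k x + 2 * A x * k x) := by
    intro x hx
    have := hB0 x hx
    simp [covForm, gammaAB, hK, LB 1 x hx]
    field_simp
    ring
  have c01 : ∀ x ∈ U, covForm (gammaAB A B) K 0 1 x + covForm (gammaAB A B) K 1 0 x
      = 2 * ((pdv 1 A x + (A x) ^ 2) * f x + (pdv 0 B x + (B x) ^ 2) * k x
            + (1 / 2) * A x * pdv 1 f x + (1 / 2) * B x * pdv 0 k x) := by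
    intro x hx
    have := hA0 x hx
    have := hB0 x hx
    simp [covForm, gammaAB, hK, LA 1 x hx, LB 0 x hx]
    field_simp
    ring
  constructor
  · rintro ⟨h1, h2, h3⟩ a b x hx
    fin_cases a <;> fin_cases b
    · simp [c00 x hx, h2 x hx]
    · exact (c01 x hx).trans (by rw [h3 x hx, mul_zero])
    · exact (add_comm _ _).trans ((c01 x hx).trans (by rw [h3 x hx, mul_zero]))
    · simp [c11 x hx, h1 x hx]
  · intro h
    refine ⟨fun x hx => ?_, fun x hx => ?_, fun x hx => ?_⟩
    · have e := h 1 1 x hx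
      rw [c11 x hx] at e
      exact (mul_eq_zero.mp (by linarith)).resolve_left (hB0 x hx)
    · have e := h 0 0 x hx
      rw [c00 x hx] at e
      exact (mul_eq_zero.mp (by linarith)).resolve_left (hA0 x hx)
    · have e := h 0 1 x hx
      rw [c01 x hx] at e
      linarith
end

section
/- Let U ⊆ ℝ² be open with coordinates (X¹, X²), let A, B : U → ℝ be C¹ and nowhere vanishing, and let Γ be the torsion-free connection with nonzero components Γ¹₁₁ = ∂₁A/A − 2B, Γ²₂₂ = ∂₂B/B − 2A, Γ¹₁₂ = Γ¹₂₁ = −(½∂₂A/A + A), Γ²₁₂ = Γ²₂₁ = −(½∂₁B/B + B), and Γ¹₂₂ = Γ²₁₁ = 0. Define the 1-form Υ by Υ₁ = ½∂₁B/B + B and Υ₂ = ½∂₂A/A + A, and the symmetric tensor h with h₁₁ = h₂₂ = 0 and h₁₂ = h₂₁ = A·B. Then the projectively changed connection Γ̂^a_{bc} = Γ^a_{bc} + δ^a_b Υ_c + δ^a_c Υ_b is torsion-free and satisfies ∂_a h_{bc} − Γ̂^d_{ab} h_{dc} − Γ̂^d_{ac} h_{bd} = 0 on U; that is, Γ̂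 is the Levi-Civita connection of the (Lorentzian) metric h = AB·dX¹⊙dX², so Γ is projectively equivalent to a metric connection (metrisable by h). -/
/-- The 1-form `Υ` with `Υ₁ = ½∂₁B/B + B` and `Υ₂ = ½∂₂A/A + A`. -/
noncomputable def upsAB (A B : (Fin 2 → ℝ) → ℝ) : Fin 2 → (Fin 2 → ℝ) → ℝ :=
  fun a x =>
    if a = 0 then (1 / 2) * pdv 0 B x / B x + B x
    else (1 / 2) * pdv 1 A x / A x + A x

/-- The projectively changed connection `Γ̂^a_{bc} = Γ^a_{bc} + δ^a_b Υ_c + δ^a_c Υ_b`. -/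
noncomputable def gammaHat (A B : (Fin 2 → ℝ) → ℝ) :
    Fin 2 → Fin 2 → Fin 2 → (Fin 2 → ℝ) → ℝ :=
  fun a b c x =>
    gammaAB A B a b c x + (if a = b then upsAB A B c x else 0)
      + (if a = c then upsAB A B b x else 0)

/-- The symmetric tensor `h` with `h₁₂ = h₂₁ = A·B` and `h₁₁ = h₂₂ = 0`. -/
noncomputable def metAB (A B : (Fin 2 → ℝ) → ℝ) :
    Fin 2 → Fin 2 → (Fin 2 → ℝ) → ℝ :=
  fun b c x => if b = c then 0 else A x * B x

/-- The projective change of `gammaAB A B` by `Υ` is torsion-free and annihilates the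
metric `h = AB dX¹⊙dX²`: the connection is metrisable by `h`. -/
theorem gammaAB_metrisable_by_h
    (U : Set (Fin 2 → ℝ)) (hU : IsOpen U)
    (A B : (Fin 2 → ℝ) → ℝ)
    (hAC1 : ContDiffOn ℝ 1 A U) (hBC1 : ContDiffOn ℝ 1 B U)
    (hA0 : ∀ x ∈ U, A x ≠ 0) (hB0 : ∀ x ∈ U, B x ≠ 0) :
    (∀ (a b c : Fin 2) (x : Fin 2 → ℝ), gammaHat A B a b c x = gammaHat A B a c b x)
    ∧ (∀ a b c : Fin 2, ∀ x ∈ U,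
        pdv a (metAB A B b c) x
          - ∑ d, gammaHat A B d a b x * metAB A B d c x
          - ∑ d, gammaHat A B d a c x * metAB A B b d x = 0) := by
  constructor
  · intro a b c x
    fin_cases a <;> fin_cases b <;> fin_cases c <;> simp [gammaHat, gammaAB]
  · intro a b c x hx
    have hA := hA0 x hx
    have hB := hB0 x hx
    have dA : DifferentiableAt ℝ A x :=
      (hAC1.differentiableOn (by norm_num)).differentiableAt (hU.mem_nhds hx)
    have dB : DifferentiableAt ℝ B x :=
      (hBC1.differentiableOn (by norm_num)).differentiableAt (hU.mem_nhds hx)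
    have hd : ∀ i, pdv i (fun y => A y * B y) x = A x * pdv i B x + B x * pdv i A x := by
      intro i
      simp [pdv, fderiv_fun_mul dA dB]
    have h0 : ∀ i, pdv i (fun _ => (0 : ℝ)) x = 0 := by
      intro i
      simp [pdv]
    have e0 : ∀ b, metAB A B b b = fun _ => (0 : ℝ) := by
      intro b; funext y; simp [metAB]
    have e1 : metAB A B 0 1 = fun y => A y * B y := by
      funext y; simp [metAB]
    have e2 : metAB A B 1 0 = fun y => A y * B y := by
      funext y; simp [metAB]
    fin_cases a <;> fin_cases b <;> fin_cases c <;>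
      simp [Fin.sum_univ_two, e0, e1, e2, hd, h0, gammaHat, gammaAB, upsAB] <;>
      field_simp <;> ring
end

section
/- Let Γ^a_{bc} be a torsion-free affine connection on an open set U ⊆ ℝ², and let ε_{ab} be a nowhere-vanishing skew-symmetric 2-form on U that is parallel: ∇_a ε_{bc} = ∂_a ε_{bc} − Γ^d_{ab} ε_{dc} − Γ^d_{ac} ε_{bd} = 0 (Γ is a special connection). For a symmetric C¹ tensor field σ^{ab} define the lowered tensor σ_{ab} = ε_{ca} ε_{db} σ^{cd}. Then there exists a vector field μ with ∇_a σ^{bc} = δ^b_a μ^c + δ^c_a μ^b on U if and only if σ_{ab} satisfies the Killing-tensor equation ∇_{(a}σ_{bc)} = 0 on U. (In two dimensions the metrisability equations are equivalent to a Killing equation.) -/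
/-- Covariant derivative `∇_a σ^{bc}` of a `(2,0)`-tensor. -/
noncomputable def covUp (Γ : Fin 2 → Fin 2 → Fin 2 → (Fin 2 → ℝ) → ℝ)
    (σ : Fin 2 → Fin 2 → (Fin 2 → ℝ) → ℝ) (a b c : Fin 2) (x : Fin 2 → ℝ) : ℝ :=
  pdv a (σ b c) x + ∑ d, Γ b a d x * σ d c x + ∑ d, Γ c a d x * σ b d x

/-- Leibniz rule for the partial derivative of a triple product `e * e * s`. -/
theorem pdv_sq_mul (a : Fin 2) (e s : (Fin 2 → ℝ) → ℝ) (x : Fin 2 → ℝ)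
    (he : DifferentiableAt ℝ e x) (hs : DifferentiableAt ℝ s x) :
    pdv a (fun y => e y * e y * s y) x
      = 2 * e x * pdv a e x * s x + e x * e x * pdv a s x := by
  have h := ((he.hasFDerivAt.mul he.hasFDerivAt).mul hs.hasFDerivAt).fderiv
  have h2 : fderiv ℝ (fun y => e y * e y * s y) x = _ := h
  simp only [pdv, h2]
  simp
  ring

theorem pdv_neg_fun (a : Fin 2) (f : (Fin 2 → ℝ) → ℝ) (x : Fin 2 → ℝ) :
    pdv a (fun y => - f y) x = - pdv a f x := by
  simp only [pdv]
  rw [show (fun y => - f y) = -f from rfl, fderiv_neg]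
  simp

/-- For a special connection (with parallel volume form `ε`), the metrisability
equations `∇_a σ^{bc} = δ^b_a μ^c + δ^c_a μ^b` hold for some `μ` iff the lowered
tensor `σ_{ab} = ε_{ca} ε_{db} σ^{cd}` satisfies the Killing-tensor equation
`∇_{(a}σ_{bc)} = 0`. -/
theorem metrisability_iff_killing_tensor_special
    (U : Set (Fin 2 → ℝ)) (hU : IsOpen U)
    (Γ : Fin 2 → Fin 2 → Fin 2 → (Fin 2 → ℝ) → ℝ)
    (hΓsym : ∀ a b c x, Γ a b c x = Γ a c b x)
    (hΓC1 : ∀ a b c, ContDiffOn ℝ 1 (Γ a b c) U)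
    (ε : Fin 2 → Fin 2 → (Fin 2 → ℝ) → ℝ)
    (hskew : ∀ a b x, ε a b x = -ε b a x)
    (hε0 : ∀ x ∈ U, ε 0 1 x ≠ 0)
    (hεC1 : ∀ a b, ContDiffOn ℝ 1 (ε a b) U)
    (hpar : ∀ a b c : Fin 2, ∀ x ∈ U,
      pdv a (ε b c) x - ∑ d, Γ d a b x * ε d c x - ∑ d, Γ d a c x * ε b d x = 0)
    (σ : Fin 2 → Fin 2 → (Fin 2 → ℝ) → ℝ)
    (hσsym : ∀ a b x, σ a b x = σ b a x)
    (hσC1 : ∀ a b, ContDiffOn ℝ 1 (σ a b) U) :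
    (∃ μ : Fin 2 → (Fin 2 → ℝ) → ℝ, ∀ a b c : Fin 2, ∀ x ∈ U,
        covUp Γ σ a b c x
          = (if b = a then μ c x else 0) + (if c = a then μ b x else 0))
    ↔ (∀ a b c : Fin 2, ∀ x ∈ U,
        covLow Γ (fun a b y => ∑ c, ∑ d, ε c a y * ε d b y * σ c d y) a b c x
          + covLow Γ (fun a b y => ∑ c, ∑ d, ε c a y * ε d b y * σ c d y) b c a x
          + covLow Γ (fun a b y => ∑ c, ∑ d, ε c a y * ε d b y * σ c d y) c a b x
          + covLow Γ (fun a b y => ∑ c, ∑ d, ε c a y * ε d b y * σ c d y) a c b x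
          + covLow Γ (fun a b y => ∑ c, ∑ d, ε c a y * ε d b y * σ c d y) b a c x
          + covLow Γ (fun a b y => ∑ c, ∑ d, ε c a y * ε d b y * σ c d y) c b a x
          = 0) := by
  have e00 : ∀ y, ε 0 0 y = 0 := fun y => by linarith [hskew 0 0 y]
  have e11 : ∀ y, ε 1 1 y = 0 := fun y => by linarith [hskew 1 1 y]
  have e10 : ∀ y, ε 1 0 y = -ε 0 1 y := fun y => hskew 1 0 y
  have s10 : ∀ y, σ 1 0 y = σ 0 1 y := fun y => hσsym 1 0 y
  have s10f : σ 1 0 = σ 0 1 := funext s10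
  set L : Fin 2 → Fin 2 → (Fin 2 → ℝ) → ℝ :=
    fun a b y => ∑ c, ∑ d, ε c a y * ε d b y * σ c d y with hL
  have L00 : L 0 0 = fun y => ε 0 1 y * ε 0 1 y * σ 1 1 y := by
    funext y; simp [hL, e00, e11, e10]
  have L01 : L 0 1 = fun y => -(ε 0 1 y * ε 0 1 y * σ 0 1 y) := by
    funext y; simp [hL, e00, e11, e10, s10]
  have L10 : L 1 0 = fun y => -(ε 0 1 y * ε 0 1 y * σ 0 1 y) := by
    funext y; simp [hL, e00, e11, e10]
  have L11 : L 1 1 = fun y => ε 0 1 y * ε 0 1 y * σ 0 0 y := by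
    funext y; simp [hL, e00, e11]
  clear_value L
  have dε : ∀ x ∈ U, DifferentiableAt ℝ (ε 0 1) x := fun x hx =>
    ((hεC1 0 1).differentiableOn (by norm_num)).differentiableAt (hU.mem_nhds hx)
  have dσ : ∀ b c, ∀ x ∈ U, DifferentiableAt ℝ (σ b c) x := fun b c x hx =>
    ((hσC1 b c).differentiableOn (by norm_num)).differentiableAt (hU.mem_nhds hx)
  have hdE : ∀ a, ∀ x ∈ U, pdv a (ε 0 1) x = (Γ 0 a 0 x + Γ 1 a 1 x) * ε 0 1 x := by
    intro a x hx
    have h := hpar a 0 1 x hx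
    simp only [Fin.sum_univ_two, e00, e11] at h
    linarith
  have K00 : ∀ a, ∀ x ∈ U, covLow Γ L a 0 0 x = ε 0 1 x ^ 2 * covUp Γ σ a 1 1 x := by
    intro a x hx
    simp only [covLow, covUp, Fin.sum_univ_two, L00, L01, L10,
      pdv_sq_mul a _ _ x (dε x hx) (dσ 1 1 x hx), hdE a x hx, s10]
    ring
  have K01 : ∀ a, ∀ x ∈ U, covLow Γ L a 0 1 x = -(ε 0 1 x ^ 2 * covUp Γ σ a 0 1 x) := by
    intro a x hx
    simp only [covLow, covUp, Fin.sum_univ_two, L00, L01, L11, pdv_neg_fun,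
      pdv_sq_mul a _ _ x (dε x hx) (dσ 0 1 x hx), hdE a x hx]
    ring
  have K10 : ∀ a, ∀ x ∈ U, covLow Γ L a 1 0 x = -(ε 0 1 x ^ 2 * covUp Γ σ a 0 1 x) := by
    intro a x hx
    simp only [covLow, covUp, Fin.sum_univ_two, L00, L10, L11, pdv_neg_fun,
      pdv_sq_mul a _ _ x (dε x hx) (dσ 0 1 x hx), hdE a x hx]
    ring
  have K11 : ∀ a, ∀ x ∈ U, covLow Γ L a 1 1 x = ε 0 1 x ^ 2 * covUp Γ σ a 0 0 x := by
    intro a x hx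
    simp only [covLow, covUp, Fin.sum_univ_two, L11, L01, L10,
      pdv_sq_mul a _ _ x (dε x hx) (dσ 0 0 x hx), hdE a x hx, s10]
    ring
  have S10 : ∀ a x, covUp Γ σ a 1 0 x = covUp Γ σ a 0 1 x := by
    intro a x
    simp only [covUp, Fin.sum_univ_two, s10f]
    ring
  constructor
  · rintro ⟨μ, hμ⟩ a b c x hx
    have h1 := hμ 0 0 0 x hx
    have h2 := hμ 0 0 1 x hx
    have h3 := hμ 0 1 1 x hx
    have h4 := hμ 1 0 0 x hx
    have h5 := hμ 1 0 1 x hx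
    have h6 := hμ 1 1 1 x hx
    simp at h1 h2 h3 h4 h5 h6
    fin_cases a <;> fin_cases b <;> fin_cases c <;>
      simp [K00 _ x hx, K01 _ x hx, K10 _ x hx, K11 _ x hx, h1, h2, h3, h4, h5, h6] <;> ring
  · intro h
    refine ⟨fun i x => if i = 0 then covUp Γ σ 1 0 1 x else covUp Γ σ 0 0 1 x, ?_⟩
    intro a b c x hx
    have hE : ε 0 1 x ^ 2 ≠ 0 := pow_ne_zero 2 (hε0 x hx)
    have h1 := h 0 0 0 x hx
    have h2 := h 0 0 1 x hx
    have h3 := h 0 1 1 x hx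
    have h4 := h 1 1 1 x hx
    simp only [K00 _ x hx, K01 _ x hx, K10 _ x hx, K11 _ x hx] at h1 h2 h3 h4
    have g1 : covUp Γ σ 0 1 1 x = 0 := mul_left_cancel₀ hE (by linarith)
    have g2 : covUp Γ σ 1 1 1 x = 2 * covUp Γ σ 0 0 1 x := mul_left_cancel₀ hE (by linarith)
    have g3 : covUp Γ σ 0 0 0 x = 2 * covUp Γ σ 1 0 1 x := mul_left_cancel₀ hE (by linarith)
    have g4 : covUp Γ σ 1 0 0 x = 0 := mul_left_cancel₀ hE (by linarith)
    fin_cases a <;> fin_cases b <;> fin_cases c <;>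
      simp [g1, g2, g3, g4, S10] <;> ring
end

section
/- Let I, J ⊆ ℝ be open intervals and let X : I → ℝ, Y : J → ℝ be C¹ with X(x) ≠ Y(y) for all x ∈ I, y ∈ J. Suppose y : I → J is twice differentiable and solves y'' + (1/(2(X(x) − Y(y))))·(Y'(y) + X'(x)·y' + Y'(y)·(y')² + X'(x)·(y')³) = 0 on I. Then the function x ↦ (Y(y(x)) + X(x)·(y'(x))²)/(1 + (y'(x))²) is constant on I; i.e. it is a quadratic first integral of the common unparametrised geodesic equation of the projectively equivalent Liouville metrics h₁ = (X−Y)(dx² + dy²) and h₂ = (1/Y − 1/X)(dx²/X + dy²/Y). -/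
/-- The quadratic first integral of the unparametrised geodesic equation of the
projectively equivalent Liouville metrics `h₁ = (X−Y)(dx² + dy²)` and
`h₂ = (1/Y − 1/X)(dx²/X + dy²/Y)`: along every solution of
`y'' + (Y' + X'y' + Y'(y')² + X'(y')³)/(2(X − Y)) = 0`, the quantity
`(Y + X(y')²)/(1 + (y')²)` is constant. -/
theorem liouville_metrics_first_integral
    (I J : Set ℝ) (hIopen : IsOpen I) (hI : I.OrdConnected)
    (hJopen : IsOpen J) (hJ : J.OrdConnected)
    (X Y : ℝ → ℝ)
    (hX : ∀ x ∈ I, DifferentiableAt ℝ X x)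
    (hY : ∀ t ∈ J, DifferentiableAt ℝ Y t)
    (hne : ∀ x ∈ I, ∀ t ∈ J, X x ≠ Y t)
    (y : ℝ → ℝ) (hmaps : ∀ x ∈ I, y x ∈ J)
    (hy1 : ∀ x ∈ I, DifferentiableAt ℝ y x)
    (hy2 : ∀ x ∈ I, DifferentiableAt ℝ (deriv y) x)
    (hode : ∀ x ∈ I,
      deriv (deriv y) x
        + (1 / (2 * (X x - Y (y x)))) *
            (deriv Y (y x) + deriv X x * deriv y x
              + deriv Y (y x) * (deriv y x) ^ 2
              + deriv X x * (deriv y x) ^ 3) = 0) :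
    ∀ x ∈ I, ∀ x' ∈ I,
      (Y (y x) + X x * (deriv y x) ^ 2) / (1 + (deriv y x) ^ 2)
        = (Y (y x') + X x' * (deriv y x') ^ 2) / (1 + (deriv y x') ^ 2) := by
  have key : ∀ x ∈ I, HasDerivAt
      (fun x => (Y (y x) + X x * (deriv y x) ^ 2) / (1 + (deriv y x) ^ 2)) 0 x := by
    intro x hx
    have h1 := (hy1 x hx).hasDerivAt
    have h2 := (hy2 x hx).hasDerivAt
    have hX1 := (hX x hx).hasDerivAt
    have hY1 := (hY _ (hmaps x hx)).hasDerivAt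
    have hYy : HasDerivAt (fun x => Y (y x)) (deriv Y (y x) * deriv y x) x := hY1.comp x h1
    have hpos : 1 + (deriv y x) ^ 2 ≠ 0 := by positivity
    have hd : X x - Y (y x) ≠ 0 := sub_ne_zero.mpr (hne x hx _ (hmaps x hx))
    have ho := hode x hx
    have hF := (hYy.fun_add (hX1.fun_mul (h2.fun_pow 2))).fun_div
      ((h2.fun_pow 2).const_add 1) hpos
    refine hF.congr_deriv ?_
    rw [div_eq_zero_iff]
    left
    field_simp at ho
    push_cast
    linear_combination (deriv y x) * ho
  intro x hx x' hx'
  exact hIopen.is_const_of_deriv_eq_zero hI.isPreconnected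
    (fun z hz => (key z hz).differentiableAt.differentiableWithinAt)
    (fun z hz => (key z hz).deriv) hx hx'
end
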